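/- Let (t, n, b) be a smooth right-handed orthonormal frame on an open set U ⊆ ℝ³, let α be smooth and nowhere zero, μ smooth, J = α(n + μb), J^⊥ = α(b − μn), and suppose J satisfies the Jacobi identity J·(curl J) = 0 on U. Let H be a smooth scalar function and v a smooth nowhere-zero vector field on U with v = J × ∇H and t = v/‖v‖. Then at every point of U: ∂_s ln(‖v‖ / (α²(1 + μ²))) = (J·(curl J^⊥)) / (α²(1 + μ²)). -/

import Mathlib

/-!
Only `J`, `H` and the direction `t = v / ‖v‖` matter: the frame gives `J^⊥ = t × J` and
`‖J‖² = α²(1 + μ²)`. Expanding `(J × ∇H) × J` yields `∇H = a J + c (t × J)` with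
`a = (J·∇H) / ‖J‖²` and `c = ‖v‖ / ‖J‖²`. The left side has vanishing curl; in the `J`-component of
the curl of the right side the `a`-terms drop out, since `J·(∇a × J) = 0` and `J·(curl J) = 0`,
which leaves `(J × (t × J))·∇c = c J·curl (t × J)`. As `t ⟂ J`, the first factor is `‖J‖² t`, and
dividing by `c ‖J‖²` gives the equation for `∂ₛ ln c`.
-/

noncomputable section

/-- Three-dimensional Euclidean space. -/
abbrev E3 : Type := EuclideanSpace ℝ (Fin 3)

/-- The Euclidean dot product on ℝ³. -/
def dot (u v : E3) : ℝ := ∑ i, u i * v i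

/-- The cross product on ℝ³. -/
def cross (u v : E3) : E3 :=
  (WithLp.equiv 2 (Fin 3 → ℝ)).symm
    ![u 1 * v 2 - u 2 * v 1, u 2 * v 0 - u 0 * v 2, u 0 * v 1 - u 1 * v 0]

/-- Partial derivative of a scalar function in the `i`-th coordinate direction. -/
def pd (i : Fin 3) (f : E3 → ℝ) (x : E3) : ℝ :=
  fderiv ℝ f x (EuclideanSpace.single i 1)

/-- The gradient ∇f of a scalar function. -/
def grad (f : E3 → ℝ) (x : E3) : E3 :=
  (WithLp.equiv 2 (Fin 3 → ℝ)).symm ![pd 0 f x, pd 1 f x, pd 2 f x]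

/-- The curl ∇×F of a vector field. -/
def curl (F : E3 → E3) (x : E3) : E3 :=
  (WithLp.equiv 2 (Fin 3 → ℝ)).symm
    ![pd 1 (fun y => F y 2) x - pd 2 (fun y => F y 1) x,
      pd 2 (fun y => F y 0) x - pd 0 (fun y => F y 2) x,
      pd 0 (fun y => F y 1) x - pd 1 (fun y => F y 0) x]

/-- Directional derivative ∂ₛ f = t·∇f of a scalar function along a vector field t. -/
def ds (t : E3 → E3) (f : E3 → ℝ) (x : E3) : ℝ := dot (t x) (grad f x)

/-- Componentwise directional derivative (u·∇)w of a vector field w along u. -/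
def dirDeriv (u w : E3 → E3) (x : E3) : E3 :=
  (WithLp.equiv 2 (Fin 3 → ℝ)).symm
    ![fderiv ℝ (fun y => w y 0) x (u x),
      fderiv ℝ (fun y => w y 1) x (u x),
      fderiv ℝ (fun y => w y 2) x (u x)]

/-- Helicity density w·(curl w) of a vector field. -/
def hel (w : E3 → E3) (x : E3) : ℝ := dot (w x) (curl w x)

/-- Cross-helicity sum n·(curl b) + b·(curl n). -/
def crossHel (n b : E3 → E3) (x : E3) : ℝ :=
  dot (n x) (curl b x) + dot (b x) (curl n x)

/-- A smooth right-handed orthonormal (Serret–Frenet type) frame on U. -/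
def IsFrameOn (t n b : E3 → E3) (U : Set E3) : Prop :=
  ContDiffOn ℝ (⊤ : ℕ∞) t U ∧ ContDiffOn ℝ (⊤ : ℕ∞) n U ∧ ContDiffOn ℝ (⊤ : ℕ∞) b U ∧
  ∀ x ∈ U, ‖t x‖ = 1 ∧ ‖n x‖ = 1 ∧ ‖b x‖ = 1 ∧
    dot (t x) (n x) = 0 ∧ dot (t x) (b x) = 0 ∧ dot (n x) (b x) = 0 ∧
    b x = cross (t x) (n x)

open Filter Topology Matrix

section VectorAlgebra

variable (u v w : E3) (c : ℝ)

lemma dot_eq_dotProduct : dot u v = u.ofLp ⬝ᵥ v.ofLp := rfl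

lemma dot_eq_inner : dot u v = inner ℝ u v := by
  simp [dot, PiLp.inner_apply, mul_comm]

lemma dot_self : dot u u = ‖u‖ ^ 2 := by
  rw [dot_eq_inner, real_inner_self_eq_norm_sq]

lemma dot_comm : dot u v = dot v u := by
  simp only [dot_eq_dotProduct, dotProduct_comm]

lemma dot_zero_right : dot u 0 = 0 := by
  simp only [dot_eq_inner, inner_zero_right]

lemma dot_add_right : dot u (v + w) = dot u v + dot u w := by
  simp only [dot_eq_inner, inner_add_right]

lemma dot_smul_left : dot (c • u) v = c * dot u v := by
  simp only [dot_eq_inner, real_inner_smul_left]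

lemma dot_smul_right : dot u (c • v) = c * dot u v := by
  simp only [dot_eq_inner, real_inner_smul_right]

lemma cross_eq_crossProduct : cross u v = WithLp.toLp 2 (crossProduct u.ofLp v.ofLp) := rfl

lemma cross_zero_left : cross 0 v = 0 := by
  simp [cross_eq_crossProduct]

lemma cross_add_right : cross u (v + w) = cross u v + cross u w := by
  simp [cross_eq_crossProduct]

lemma cross_smul_left : cross (c • u) v = c • cross u v := by
  simp [cross_eq_crossProduct]

lemma cross_smul_right : cross u (c • v) = c • cross u v := by
  simp [cross_eq_crossProduct]

lemma dot_cross_left_self : dot u (cross u v) = 0 :=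
  dot_self_cross u.ofLp v.ofLp

lemma dot_cross_right_self : dot u (cross v u) = 0 :=
  dot_cross_self v.ofLp u.ofLp

lemma dot_cross_eq_neg_cross_dot : dot u (cross v w) = -dot (cross u w) v := by
  simp only [dot_eq_dotProduct, cross_eq_crossProduct]
  rw [triple_product_permutation, ← cross_anticomm, dotProduct_neg, dotProduct_comm]

lemma cross_cross_left : cross (cross u v) w = dot u w • v - dot v w • u :=
  congrArg (WithLp.toLp 2) (cross_cross_eq_smul_sub_smul u.ofLp v.ofLp w.ofLp)

lemma cross_cross_right : cross u (cross v w) = dot u w • v - dot v u • w :=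
  congrArg (WithLp.toLp 2) (cross_cross_eq_smul_sub_smul' u.ofLp v.ofLp w.ofLp)

variable {u v}

lemma ne_zero_of_cross_ne_zero (h : cross u v ≠ 0) : u ≠ 0 := by
  rintro rfl
  exact h (cross_zero_left v)

lemma eq_smul_add_smul_cross_cross (hu : u ≠ 0) (v : E3) :
    v = (dot u v / ‖u‖ ^ 2) • u + (‖u‖ ^ 2)⁻¹ • cross (cross u v) u := by
  have hu' : ‖u‖ ^ 2 ≠ 0 := by positivity
  rw [cross_cross_left, dot_self, dot_comm v, smul_sub, inv_smul_smul₀ hu', smul_smul,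
    div_eq_inv_mul, add_sub_cancel]

lemma eq_smul_add_smul_normalized_cross_cross (h : cross u v ≠ 0) :
    v = (dot u v / ‖u‖ ^ 2) • u +
      (‖cross u v‖ / ‖u‖ ^ 2) • cross (‖cross u v‖⁻¹ • cross u v) u := by
  rw [div_eq_inv_mul ‖cross u v‖, mul_smul, cross_smul_left,
    smul_inv_smul₀ (norm_ne_zero_iff.2 h)]
  exact eq_smul_add_smul_cross_cross (ne_zero_of_cross_ne_zero h) v

lemma cross_cross_self_of_dot_eq_zero (h : dot v u = 0) :
    cross u (cross v u) = ‖u‖ ^ 2 • v := by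
  rw [cross_cross_right, dot_self, h, zero_smul, sub_zero]

end VectorAlgebra

section Differentiability

variable {𝕜 E F : Type*} [NontriviallyNormedField 𝕜] [NormedAddCommGroup E] [NormedSpace 𝕜 E]
  [NormedAddCommGroup F] [NormedSpace 𝕜 F] {x : E}

lemma differentiableAt_div {f g : E → 𝕜} (hf : DifferentiableAt 𝕜 f x)
    (hg : DifferentiableAt 𝕜 g x) (hgx : g x ≠ 0) :
    DifferentiableAt 𝕜 (fun y => f y / g y) x := by
  simp only [div_eq_mul_inv]
  exact hf.fun_mul (hg.inv hgx)

lemma differentiableAt_fderiv {f : E → F} (hf : ContDiffAt 𝕜 2 f x) :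
    DifferentiableAt 𝕜 (fderiv 𝕜 f) x :=
  (hf.fderiv_right (m := 1) (by norm_num)).differentiableAt one_ne_zero

end Differentiability

section VectorCalculus

variable {f g : E3 → ℝ} {F G : E3 → E3} {x : E3}

lemma grad_apply (f : E3 → ℝ) (x : E3) (i : Fin 3) : grad f x i = pd i f x := by
  fin_cases i <;> rfl

lemma dot_grad (u : E3) (f : E3 → ℝ) (x : E3) : dot u (grad f x) = fderiv ℝ f x u := by
  have hu : u = ∑ i, u i • EuclideanSpace.single i (1 : ℝ) := by
    ext j
    simp [Pi.single_apply]
  conv_rhs => rw [hu, map_sum]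
  simp [dot, grad_apply, pd]

lemma ds_log (t : E3 → E3) (hf : DifferentiableAt ℝ f x) (hfx : f x ≠ 0) :
    ds t (fun y => Real.log (f y)) x = ds t f x / f x := by
  simp [ds, dot_grad, fderiv.log hf hfx, inv_mul_eq_div]

lemma differentiableAt_dot (hF : DifferentiableAt ℝ F x) (hG : DifferentiableAt ℝ G x) :
    DifferentiableAt ℝ (fun y => dot (F y) (G y)) x := by
  simp only [dot_eq_inner]
  exact hF.inner ℝ hG

lemma differentiableAt_cross (hF : DifferentiableAt ℝ F x) (hG : DifferentiableAt ℝ G x) :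
    DifferentiableAt ℝ (fun y => cross (F y) (G y)) x := by
  have hFi := differentiableAt_euclidean.1 hF
  have hGi := differentiableAt_euclidean.1 hG
  refine differentiableAt_euclidean.2 fun i => ?_
  fin_cases i
  · exact ((hFi 1).mul (hGi 2)).sub ((hFi 2).mul (hGi 1))
  · exact ((hFi 2).mul (hGi 0)).sub ((hFi 0).mul (hGi 2))
  · exact ((hFi 0).mul (hGi 1)).sub ((hFi 1).mul (hGi 0))

lemma differentiableAt_grad (hf : ContDiffAt ℝ 2 f x) : DifferentiableAt ℝ (grad f) x := by
  refine differentiableAt_euclidean.2 fun i => ?_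
  simp only [grad_apply]
  exact (differentiableAt_fderiv hf).clm_apply (differentiableAt_const _)

lemma pd_comm (hf : ContDiffAt ℝ 2 f x) (i j : Fin 3) : pd i (pd j f) x = pd j (pd i f) x := by
  have pd_pd (k l : Fin 3) : pd k (pd l f) x =
      fderiv ℝ (fderiv ℝ f) x (EuclideanSpace.single k 1) (EuclideanSpace.single l 1) := by
    unfold pd
    rw [fderiv_clm_apply (differentiableAt_fderiv hf) (differentiableAt_const _)]
    simp
  rw [pd_pd, pd_pd, hf.isSymmSndFDerivAt (by simp)]

lemma curl_grad (hf : ContDiffAt ℝ 2 f x) : curl (grad f) x = 0 := by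
  simp only [curl, grad_apply]
  ext i
  fin_cases i <;> simp [pd_comm hf]

lemma pd_add (hf : DifferentiableAt ℝ f x) (hg : DifferentiableAt ℝ g x) (i : Fin 3) :
    pd i (fun y => f y + g y) x = pd i f x + pd i g x := by
  simp [pd, fderiv_fun_add hf hg]

lemma pd_mul (hf : DifferentiableAt ℝ f x) (hg : DifferentiableAt ℝ g x) (i : Fin 3) :
    pd i (fun y => f y * g y) x = f x * pd i g x + g x * pd i f x := by
  simp [pd, fderiv_fun_mul hf hg]

lemma curl_congr (h : F =ᶠ[𝓝 x] G) : curl F x = curl G x := by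
  have hpd (i j : Fin 3) : pd i (fun y => F y j) x = pd i (fun y => G y j) x := by
    have hj : (fun y => F y j) =ᶠ[𝓝 x] fun y => G y j := h.mono fun y hy => by simp only [hy]
    rw [pd, hj.fderiv_eq, pd]
  simp only [curl, hpd]

lemma curl_add (hF : DifferentiableAt ℝ F x) (hG : DifferentiableAt ℝ G x) :
    curl (fun y => F y + G y) x = curl F x + curl G x := by
  have hpd (i j : Fin 3) := pd_add (differentiableAt_euclidean.1 hF j)
    (differentiableAt_euclidean.1 hG j) i
  ext i
  fin_cases i <;> simp [curl, hpd] <;> ring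

lemma curl_smul (hf : DifferentiableAt ℝ f x) (hF : DifferentiableAt ℝ F x) :
    curl (fun y => f y • F y) x = f x • curl F x + cross (grad f x) (F x) := by
  have hpd (i j : Fin 3) := pd_mul hf (differentiableAt_euclidean.1 hF j) i
  ext i
  fin_cases i <;> simp [curl, cross, grad_apply, hpd] <;> ring

end VectorCalculus

section HamiltonianStructure

variable {H a c : E3 → ℝ} {J K : E3 → E3} {x : E3}

lemma cross_dot_grad_of_grad_eq
    (hH : ContDiffAt ℝ 2 H x) (ha : DifferentiableAt ℝ a x) (hc : DifferentiableAt ℝ c x)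
    (hJ : DifferentiableAt ℝ J x) (hK : DifferentiableAt ℝ K x)
    (hjac : dot (J x) (curl J x) = 0)
    (hgrad : ∀ᶠ y in 𝓝 x, grad H y = a y • J y + c y • K y) :
    dot (cross (J x) (K x)) (grad c x) = c x * dot (J x) (curl K x) := by
  have hcurl : 0 = a x • curl J x + cross (grad a x) (J x) +
      (c x • curl K x + cross (grad c x) (K x)) := by
    rw [← curl_grad hH, curl_congr hgrad, curl_add (ha.fun_smul hJ) (hc.fun_smul hK),
      curl_smul ha hJ, curl_smul hc hK]
  have hdot := congrArg (dot (J x)) hcurl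
  simp only [dot_add_right, dot_smul_right, hjac, dot_cross_right_self,
    dot_cross_eq_neg_cross_dot (J x) _ (K x), dot_zero_right] at hdot
  linear_combination hdot

lemma ds_log_of_grad_eq {t : E3 → E3} {w : ℝ}
    (hH : ContDiffAt ℝ 2 H x) (ha : DifferentiableAt ℝ a x) (hc : DifferentiableAt ℝ c x)
    (hJ : DifferentiableAt ℝ J x) (hK : DifferentiableAt ℝ K x)
    (hjac : dot (J x) (curl J x) = 0)
    (hgrad : ∀ᶠ y in 𝓝 x, grad H y = a y • J y + c y • K y)
    (hc0 : c x ≠ 0) (hw0 : w ≠ 0) (hJK : cross (J x) (K x) = w • t x) :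
    ds t (fun y => Real.log (c y)) x = dot (J x) (curl K x) / w := by
  have hds : w * ds t c x = c x * dot (J x) (curl K x) := by
    rw [ds, ← dot_smul_left, ← hJK, cross_dot_grad_of_grad_eq hH ha hc hJ hK hjac hgrad]
  rw [ds_log t hc hc0, div_eq_div_iff hc0 hw0]
  linear_combination hds

end HamiltonianStructure

section Frame

lemma norm_sq_smul_add_smul_of_inner_eq_zero {E : Type*} [NormedAddCommGroup E]
    [InnerProductSpace ℝ E] {n b : E} (hn : ‖n‖ = 1) (hb : ‖b‖ = 1) (hnb : inner ℝ n b = 0)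
    (α μ : ℝ) :
    ‖α • (n + μ • b)‖ ^ 2 = α ^ 2 * (1 + μ ^ 2) := by
  rw [norm_smul, mul_pow, norm_add_sq_real, inner_smul_right, hnb, norm_smul, hn, hb]
  simp

lemma cross_smul_add_smul_cross {t n : E3} (ht : ‖t‖ = 1) (htn : dot t n = 0) (α μ : ℝ) :
    cross t (α • (n + μ • cross t n)) = α • (cross t n - μ • n) := by
  rw [cross_smul_right, cross_add_right, cross_smul_right, cross_cross_right, htn, dot_self, ht]
  simp [sub_eq_add_neg]

namespace IsFrameOn

variable {t n b : E3 → E3} {U : Set E3} {α μ : E3 → ℝ}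

lemma contDiffOn_smul_add_smul (h : IsFrameOn t n b U) (hα : ContDiffOn ℝ (⊤ : ℕ∞) α U)
    (hμ : ContDiffOn ℝ (⊤ : ℕ∞) μ U) :
    ContDiffOn ℝ (⊤ : ℕ∞) (fun x => α x • (n x + μ x • b x)) U := by
  obtain ⟨-, hn, hb, -⟩ := h
  exact hα.smul (hn.add (hμ.smul hb))

lemma norm_sq_smul_add_smul (h : IsFrameOn t n b U) (α μ : E3 → ℝ) :
    ∀ x ∈ U, ‖α x • (n x + μ x • b x)‖ ^ 2 = α x ^ 2 * (1 + μ x ^ 2) := by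
  intro x hx
  obtain ⟨-, hn, hb, -, -, hnb, -⟩ := h.2.2.2 x hx
  exact norm_sq_smul_add_smul_of_inner_eq_zero hn hb (dot_eq_inner (n x) (b x) ▸ hnb) (α x) (μ x)

lemma cross_smul_add_smul (h : IsFrameOn t n b U) (α μ : E3 → ℝ) :
    ∀ x ∈ U, cross (t x) (α x • (n x + μ x • b x)) = α x • (b x - μ x • n x) := by
  intro x hx
  obtain ⟨ht, -, -, htn, -, -, hb⟩ := h.2.2.2 x hx
  rw [hb, cross_smul_add_smul_cross ht htn]

end IsFrameOn

end Frame

theorem integrability_condition_for_H_general {U : Set E3} (hU : IsOpen U)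
    {J K t v : E3 → E3} {H w : E3 → ℝ}
    (hJ : DifferentiableOn ℝ J U) (hH : ContDiffOn ℝ 2 H U)
    (hjac : ∀ x ∈ U, dot (J x) (curl J x) = 0)
    (hham : ∀ x ∈ U, v x = cross (J x) (grad H x)) (hv0 : ∀ x ∈ U, v x ≠ 0)
    (ht : ∀ x ∈ U, t x = ‖v x‖⁻¹ • v x)
    (hw : ∀ x ∈ U, w x = ‖J x‖ ^ 2) (hK : ∀ x ∈ U, K x = cross (t x) (J x)) :
    ∀ x ∈ U, ds t (fun y => Real.log (‖v y‖ / w y)) x = dot (J x) (curl K x) / w x := by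
  intro x hx
  have hUx : ∀ᶠ y in 𝓝 x, y ∈ U := hU.mem_nhds hx
  have hcross0 (y) (hy : y ∈ U) : cross (J y) (grad H y) ≠ 0 := hham y hy ▸ hv0 y hy
  have hw0 : w x ≠ 0 := by
    rw [hw x hx]
    exact pow_ne_zero 2 (norm_ne_zero_iff.2 (ne_zero_of_cross_ne_zero (hcross0 x hx)))
  have hnorm0 : ‖v x‖ ≠ 0 := norm_ne_zero_iff.2 (hv0 x hx)
  have hHx : ContDiffAt ℝ 2 H x := hH.contDiffAt hUx
  have dJ : DifferentiableAt ℝ J x := hJ.differentiableAt hUx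
  have dgrad : DifferentiableAt ℝ (grad H) x := differentiableAt_grad hHx
  have dv : DifferentiableAt ℝ v x :=
    (differentiableAt_cross dJ dgrad).congr_of_eventuallyEq (hUx.mono hham)
  have dnorm : DifferentiableAt ℝ (fun y => ‖v y‖) x := dv.norm ℝ (hv0 x hx)
  have dt : DifferentiableAt ℝ t x :=
    ((dnorm.inv hnorm0).smul dv).congr_of_eventuallyEq (hUx.mono ht)
  have dK : DifferentiableAt ℝ K x :=
    (differentiableAt_cross dt dJ).congr_of_eventuallyEq (hUx.mono hK)
  have dw : DifferentiableAt ℝ w x := (dJ.norm_sq ℝ).congr_of_eventuallyEq (hUx.mono hw)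
  have dc : DifferentiableAt ℝ (fun y => ‖v y‖ / w y) x := differentiableAt_div dnorm dw hw0
  have hgrad : ∀ᶠ y in 𝓝 x,
      grad H y = (dot (J y) (grad H y) / w y) • J y + (‖v y‖ / w y) • K y := by
    filter_upwards [hUx] with y hy
    rw [hK y hy, ht y hy, hham y hy, hw y hy]
    exact eq_smul_add_smul_normalized_cross_cross (hcross0 y hy)
  have htJ : dot (t x) (J x) = 0 := by
    rw [ht x hx, dot_smul_left, hham x hx, dot_comm, dot_cross_left_self, mul_zero]
  have hJK : cross (J x) (K x) = w x • t x := by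
    rw [hK x hx, hw x hx, cross_cross_self_of_dot_eq_zero htJ]
  exact ds_log_of_grad_eq hHx (differentiableAt_div (differentiableAt_dot dJ dgrad) dw hw0) dc
    dJ dK (hjac x hx) hgrad (div_ne_zero hnorm0 hw0) hw0 hJK

/-- ∂ₛ ln(‖v‖/(α²(1+μ²))) = (J·curl J^⊥)/(α²(1+μ²)) for a
Hamiltonian structure with Poisson vector J = α(n + μb), J^⊥ = α(b − μn). -/
theorem integrability_condition_for_H
    (U : Set E3) (hU : IsOpen U) (t n b : E3 → E3)
    (hframe : IsFrameOn t n b U)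
    (α μ : E3 → ℝ)
    (hα : ContDiffOn ℝ (⊤ : ℕ∞) α U) (hμ : ContDiffOn ℝ (⊤ : ℕ∞) μ U)
    (hα0 : ∀ x ∈ U, α x ≠ 0)
    (hjac : ∀ x ∈ U, dot (α x • (n x + μ x • b x))
        (curl (fun y => α y • (n y + μ y • b y)) x) = 0)
    (H : E3 → ℝ) (hH : ContDiffOn ℝ (⊤ : ℕ∞) H U)
    (v : E3 → E3) (hv : ContDiffOn ℝ (⊤ : ℕ∞) v U) (hv0 : ∀ x ∈ U, v x ≠ 0)
    (hham : ∀ x ∈ U, v x = cross (α x • (n x + μ x • b x)) (grad H x))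
    (ht : ∀ x ∈ U, t x = ‖v x‖⁻¹ • v x) :
    ∀ x ∈ U,
      ds t (fun y => Real.log (‖v y‖ / (α y ^ 2 * (1 + μ y ^ 2)))) x
        = dot (α x • (n x + μ x • b x))
            (curl (fun y => α y • (b y - μ y • n y)) x)
          / (α x ^ 2 * (1 + μ x ^ 2)) :=
  integrability_condition_for_H_general hU
    ((hframe.contDiffOn_smul_add_smul hα hμ).differentiableOn (by simp))
    (hH.of_le (WithTop.coe_le_coe.2 le_top)) hjac hham hv0 ht
    (fun x hx => (hframe.norm_sq_smul_add_smul α μ x hx).symm)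
    (fun x hx => (hframe.cross_smul_add_smul α μ x hx).symm)
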